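/- Let L be a finite-dimensional real Lie algebra with nondegenerate Killing form κ, and let x ∈ L. Then the following are equivalent: (1) there exist a, b ∈ L with a regular such that x = ⁅a, b⁆; (2) there exists a Cartan subalgebra C of L such that κ(x, c) = 0 for all c ∈ C. -/

import Mathlib

/-!
Since `κ` is invariant and nondegenerate, the range of `ad a` is the `κ`-orthogonal complement of
its kernel. For regular `a` the Engel subalgebra of `a` is a Cartan subalgebra, hence abelian and
equal to that kernel. It remains to see that every Cartan subalgebra `C` contains a regular element.

Choose `h ∈ C` with `C` as its Engel subalgebra, so that `L = C + ⁅L, h⁆`. The coefficients of the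
characteristic polynomial of `ad y` are polynomials in `y` annihilated by the vector fields
`y ↦ ⁅x, y⁆`, and such a polynomial `p` is zero as soon as it vanishes on `C`: if
`p (h + t y) = ∑ tᵐ Fₘ(y)`, then invariance says that the derivative of `Fₘ₊₁` along the constant
field `⁅x, h⁆` is minus the derivative of `Fₘ` along `y ↦ ⁅x, y⁆`. Inductively, `Fₘ₊₁` is invariant
under translation by `⁅L, h⁆` and vanishes on `C`, so it is zero. On `C` all coefficients of degree
less than `dim C` vanish, so `dim C` is at most the rank of `L` and `h` is regular.
-/

open Module
open scoped Polynomial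

section Derivations

variable {R A n : Type*} [CommRing R] [CommRing A] [Algebra R A]

section DualNumber

open TrivSqZeroExt DualNumber

/-- The ring homomorphism `a ↦ a + D a ε` into the dual numbers attached to a derivation `D`. It
turns a statement about `D` into one about conjugate matrices over the dual numbers. -/
noncomputable def dualNumberHom (D : Derivation R A A) : A →+* A[ε] where
  toFun a := inl a + inr (D a)
  map_one' := by simp
  map_zero' := by simp
  map_add' a b := by ext <;> simp
  map_mul' a b := by ext <;> simp [mul_comm]

theorem fst_dualNumberHom (D : Derivation R A A) (a : A) : (dualNumberHom D a).fst = a := by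
  simp [dualNumberHom]

theorem snd_dualNumberHom (D : Derivation R A A) (a : A) : (dualNumberHom D a).snd = D a := by
  simp [dualNumberHom]

theorem derivation_coeff_charpoly_eq_zero [Fintype n] [DecidableEq n] (D : Derivation R A A)
    {M N : Matrix n n A} (hD : N.map D = M * N - N * M) (k : ℕ) :
    D (N.charpoly.coeff k) = 0 := by
  let M' : Matrix n n A[ε] := M.map inr
  have hM' : M' * M' = 0 := by
    ext i j <;> simp [M', Matrix.mul_apply]
  let U : (Matrix n n A[ε])ˣ :=
    { val := 1 + M', inv := 1 - M'
      val_inv := by noncomm_ring [hM']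
      inv_val := by noncomm_ring [hM'] }
  have hcomm : U.val * N.map (inlHom A A) = N.map (dualNumberHom D) * U.val := by
    have hD' (i j) : D (N i j) = (M * N) i j - (N * M) i j := congr_fun₂ hD i j
    simp only [U, M', add_mul, mul_add, one_mul, mul_one]
    ext i j
    · simp [-inr_eq_smul_eps, Matrix.mul_apply, fst_sum, fst_dualNumberHom]
    · simp [-inr_eq_smul_eps, Matrix.mul_apply, snd_sum, fst_dualNumberHom, snd_dualNumberHom,
        hD', mul_comm]
  have hconj : N.map (dualNumberHom D) = U.val * N.map (inlHom A A) * U⁻¹.val := by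
    rw [hcomm, mul_assoc, U.mul_inv, mul_one]
  have hcharpoly : N.charpoly.map (dualNumberHom D) = N.charpoly.map (inlHom A A) := by
    rw [← Matrix.charpoly_map, ← Matrix.charpoly_map, hconj, Matrix.coe_units_inv,
      Matrix.charpoly_units_conj]
  simpa [snd_dualNumberHom] using congr_arg (fun p ↦ (p.coeff k).snd) hcharpoly

end DualNumber

/-- The derivation of `A[X]` acting on coefficients by `D`. This is `Derivation.mapCoeffs` with
values in `A[X]` instead of the isomorphic `PolynomialModule A A`. -/
noncomputable def coeffDerivation (D : Derivation R A A) : Derivation R A[X] A[X] :=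
  PolynomialModule.equivPolynomialSelf.compDer D.mapCoeffs

theorem coeff_coeffDerivation (D : Derivation R A A) (p : A[X]) (k : ℕ) :
    (coeffDerivation D p).coeff k = D (p.coeff k) :=
  rfl

theorem coeffDerivation_C (D : Derivation R A A) (a : A) :
    coeffDerivation D (Polynomial.C a) = Polynomial.C (D a) := by
  ext k
  simp [coeff_coeffDerivation, Polynomial.coeff_C, apply_ite D]

theorem coeffDerivation_X (D : Derivation R A A) : coeffDerivation D Polynomial.X = 0 := by
  ext k
  simp [coeff_coeffDerivation, Polynomial.coeff_X, apply_ite D]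

end Derivations

section LineSubst

open Polynomial

variable {R A ι : Type*} [CommRing R] [CommRing A] [Algebra R A]

/-- The restriction `p ↦ p (u + X v)` of a multivariate polynomial to the line through `u` in
direction `v`. The coordinates of `u` and `v` may lie in any `R`-algebra, so as to allow a generic
direction `v`. -/
noncomputable def lineSubst (u v : ι → A) : MvPolynomial ι R →ₐ[R] A[X] :=
  MvPolynomial.aeval fun i ↦ C (u i) + X * C (v i)

theorem lineSubst_X (u v : ι → A) (i : ι) :
    lineSubst u v (MvPolynomial.X i : MvPolynomial ι R) = C (u i) + X * C (v i) :=
  MvPolynomial.aeval_X _ i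

theorem eval_lineSubst (u v : ι → R) (t : R) (p : MvPolynomial ι R) :
    (lineSubst u v p).eval t = MvPolynomial.eval (u + t • v) p := by
  suffices (evalRingHom t).comp (lineSubst u v : MvPolynomial ι R →ₐ[R] R[X]).toRingHom =
      MvPolynomial.eval (u + t • v) from RingHom.congr_fun this p
  ext i
  · simp
  · simp [lineSubst_X, mul_comm t]

end LineSubst

open MvPolynomial

section VectorFields

variable {K V M ι κ : Type*} [Field K] [AddCommGroup V] [Module K V] [AddCommGroup M] [Module K M]
  (b : Basis ι K V) (bM : Basis κ K M)

theorem mvPolynomial_ext_of_eval_repr [Infinite K] [Finite ι] {p q : MvPolynomial ι K}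
    (h : ∀ v, eval (b.repr v) p = eval (b.repr v) q) : p = q :=
  have := Fintype.ofFinite ι
  MvPolynomial.funext fun x ↦ by
    simpa only [← b.equivFun_apply, LinearEquiv.apply_symm_apply] using h (b.equivFun.symm x)

theorem matrix_ext_of_map_eval_repr [Infinite K] [Finite ι] {m n : Type*}
    {P Q : Matrix m n (MvPolynomial ι K)}
    (h : ∀ v, P.map (eval (b.repr v)) = Q.map (eval (b.repr v))) : P = Q := by
  ext1 i j
  exact mvPolynomial_ext_of_eval_repr b fun v ↦ congr_fun₂ (h v) i j

/-- The derivation of the polynomial functions on `V`, in the coordinates given by `b`, along the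
constant vector field `w`. -/
noncomputable def constantVectorField (w : V) :
    Derivation K (MvPolynomial ι K) (MvPolynomial ι K) :=
  mkDerivation K fun i ↦ C (b.repr w i)

theorem constantVectorField_X (w : V) (i : ι) :
    constantVectorField b w (X i) = C (b.repr w i) :=
  mkDerivation_X _ _ i

theorem derivative_lineSubst (v w : V) (p : MvPolynomial ι K) :
    (lineSubst (b.repr v) (b.repr w) p).derivative =
      lineSubst (b.repr v) (b.repr w) (constantVectorField b w p) := by
  induction p using MvPolynomial.induction_on with
  | C a => simp
  | add p q hp hq => simp only [map_add, hp, hq]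
  | mul_X p i hp =>
    simp only [map_mul, map_add, lineSubst_X, constantVectorField_X, algHom_C,
      Polynomial.algebraMap_eq, Derivation.leibniz, smul_eq_mul, hp, Polynomial.derivative_mul,
      Polynomial.derivative_C, Polynomial.derivative_X]
    ring

theorem eval_add_of_constantVectorField_eq_zero [CharZero K] {w : V} {p : MvPolynomial ι K}
    (hp : constantVectorField b w p = 0) (v : V) :
    eval (b.repr (v + w)) p = eval (b.repr v) p := by
  obtain ⟨c, hc⟩ := Polynomial.natDegree_eq_zero.mp <| Polynomial.derivative_eq_zero.mp <|
    (derivative_lineSubst b v w p).trans (by rw [hp, map_zero])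
  have heval (t : K) : eval (b.repr (v + t • w)) p = c := by
    rw [map_add, map_smul, Finsupp.coe_add, Finsupp.coe_smul, ← eval_lineSubst, ← hc,
      Polynomial.eval_C]
  calc eval (b.repr (v + w)) p = c := by simpa using heval 1
    _ = eval (b.repr v) p := by simpa using (heval 0).symm

theorem eq_zero_of_constantVectorField_eq_zero [CharZero K] [Finite ι] {H W : Submodule K V}
    (hHW : H ⊔ W = ⊤) {p : MvPolynomial ι K} (hH : ∀ k ∈ H, eval (b.repr k) p = 0)
    (hW : ∀ w ∈ W, constantVectorField b w p = 0) : p = 0 := by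
  refine mvPolynomial_ext_of_eval_repr b fun v ↦ ?_
  obtain ⟨k, hk, w, hw, rfl⟩ := Submodule.mem_sup.mp (hHW ▸ Submodule.mem_top : v ∈ H ⊔ W)
  rw [eval_add_of_constantVectorField_eq_zero b (hW w hw), hH k hk, map_zero]

variable [Fintype ι] [DecidableEq ι]

/-- The derivation of the polynomial functions on `V`, in the coordinates given by `b`, along the
linear vector field `v ↦ A v`. -/
noncomputable def linearVectorField (A : End K V) :
    Derivation K (MvPolynomial ι K) (MvPolynomial ι K) :=
  mkDerivation K (A.toMvPolynomial b b)

theorem linearVectorField_X (A : End K V) (i : ι) :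
    linearVectorField b A (X i) = A.toMvPolynomial b b i :=
  mkDerivation_X _ _ i

theorem linearVectorField_toMvPolynomial [Finite κ] (A : End K V) (f : V →ₗ[K] M) (i : κ) :
    linearVectorField b A (f.toMvPolynomial b bM i) = (f ∘ₗ A).toMvPolynomial b bM i := by
  have := Fintype.ofFinite κ
  rw [LinearMap.toMvPolynomial_comp b b bM]
  simp [LinearMap.toMvPolynomial, Matrix.toMvPolynomial, ← C_mul_X_eq_monomial, C_mul',
    linearVectorField_X]

end VectorFields

section GenericMatrix

variable {K V M ι κ : Type*} [Field K] [AddCommGroup V] [Module K V] [AddCommGroup M] [Module K M]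
  [Fintype ι] [DecidableEq ι] [Fintype κ] [DecidableEq κ] (b : Basis ι K V) (bM : Basis κ K M)

/-- The matrix of `φ v` for a generic `v`: its entries are linear forms in the coordinates of `v`
with respect to `b`. -/
noncomputable def genericMatrix (φ : V →ₗ[K] End K M) : Matrix κ κ (MvPolynomial ι K) :=
  Matrix.of fun i j ↦ φ.toMvPolynomial b bM.end (i, j)

theorem map_eval_genericMatrix (φ : V →ₗ[K] End K M) (v : V) :
    (genericMatrix b bM φ).map (eval (b.repr v)) = LinearMap.toMatrix bM bM (φ v) := by
  ext i j
  simp only [genericMatrix, Matrix.map_apply, Matrix.of_apply,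
    LinearMap.toMvPolynomial_eval_eq_apply, LinearEquiv.symm_apply_apply, Basis.end_repr_apply]
  rfl

theorem map_linearVectorField_genericMatrix (φ : V →ₗ[K] End K M) (A : End K V) :
    (genericMatrix b bM φ).map (linearVectorField b A) = genericMatrix b bM (φ ∘ₗ A) := by
  ext1 i j
  exact linearVectorField_toMvPolynomial b bM.end A φ (i, j)

variable [Infinite K]

theorem genericMatrix_comp_eq_commutator {φ : V →ₗ[K] End K M} {A : End K V} {B : End K M}
    (h : ∀ v, φ (A v) = B * φ v - φ v * B) :
    genericMatrix b bM (φ ∘ₗ A) =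
      (LinearMap.toMatrix bM bM B).map C * genericMatrix b bM φ -
        genericMatrix b bM φ * (LinearMap.toMatrix bM bM B).map C := by
  refine matrix_ext_of_map_eval_repr b fun v ↦ ?_
  have hB : ((LinearMap.toMatrix bM bM B).map C).map (eval (b.repr v)) =
      LinearMap.toMatrix bM bM B := by
    ext i j
    exact eval_C _
  rw [Matrix.map_sub _ (map_sub _), Matrix.map_mul, Matrix.map_mul, hB, map_eval_genericMatrix,
    map_eval_genericMatrix, LinearMap.comp_apply, h, map_sub, LinearMap.toMatrix_mul,
    LinearMap.toMatrix_mul]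

theorem polyCharpoly_eq_charpoly_genericMatrix [FiniteDimensional K M] (φ : V →ₗ[K] End K M) :
    φ.polyCharpoly b = (genericMatrix b bM φ).charpoly := by
  ext1 k
  refine mvPolynomial_ext_of_eval_repr b fun v ↦ ?_
  rw [LinearMap.polyCharpoly_coeff_eval, ← Polynomial.coeff_map, ← Matrix.charpoly_map,
    map_eval_genericMatrix, LinearMap.charpoly_toMatrix]

theorem linearVectorField_polyCharpoly_coeff_eq_zero [FiniteDimensional K M]
    {φ : V →ₗ[K] End K M} {A : End K V} {B : End K M}
    (h : ∀ v, φ (A v) = B * φ v - φ v * B) (k : ℕ) :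
    linearVectorField b A ((φ.polyCharpoly b).coeff k) = 0 := by
  rw [polyCharpoly_eq_charpoly_genericMatrix b (finBasis K M)]
  exact derivation_coeff_charpoly_eq_zero _ ((map_linearVectorField_genericMatrix b _ φ A).trans
    (genericMatrix_comp_eq_commutator b _ h)) k

end GenericMatrix

section TaylorExpansion

variable {K V ι : Type*} [Field K] [AddCommGroup V] [Module K V] (b : Basis ι K V)

/-- The expansion `p (h + t y) = ∑ tᵐ Fₘ(y)` of a polynomial function on `V` around `h`. Here `t` is
the variable of the outer polynomial ring and `Fₘ` is the `m`-th coefficient. -/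
noncomputable def taylorExpansion (h : V) : MvPolynomial ι K →ₐ[K] (MvPolynomial ι K)[X] :=
  lineSubst (fun i ↦ C (b.repr h i)) X

theorem map_eval_taylorExpansion (h v : V) (p : MvPolynomial ι K) :
    (taylorExpansion b h p).map (eval (b.repr v)) = lineSubst (b.repr h) (b.repr v) p := by
  suffices (Polynomial.mapRingHom (eval (b.repr v))).comp (taylorExpansion b h).toRingHom =
      (lineSubst (b.repr h) (b.repr v) : MvPolynomial ι K →ₐ[K] K[X]).toRingHom from
    RingHom.congr_fun this p
  ext i : 2
  · simp [taylorExpansion, MvPolynomial.algebraMap_eq]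
  · simp [taylorExpansion, lineSubst_X]

theorem eval_coeff_taylorExpansion (h v : V) (m : ℕ) (p : MvPolynomial ι K) :
    eval (b.repr v) ((taylorExpansion b h p).coeff m) =
      (lineSubst (b.repr h) (b.repr v) p).coeff m := by
  rw [← map_eval_taylorExpansion, Polynomial.coeff_map]

section Infinite

variable [Infinite K]

theorem taylorExpansion_injective [Finite ι] (h : V) :
    Function.Injective (taylorExpansion b h) := by
  refine fun p q hpq ↦ mvPolynomial_ext_of_eval_repr b fun v ↦ ?_
  have heval (r : MvPolynomial ι K) : eval (b.repr v) r =
      ((taylorExpansion b h r).map (eval (b.repr (v - h)))).eval 1 := by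
    rw [map_eval_taylorExpansion, eval_lineSubst, one_smul, ← Finsupp.coe_add, ← map_add,
      add_sub_cancel]
  rw [heval p, heval q, hpq]

theorem coeff_zero_taylorExpansion [Finite ι] (h : V) (p : MvPolynomial ι K) :
    (taylorExpansion b h p).coeff 0 = C (eval (b.repr h) p) := by
  refine mvPolynomial_ext_of_eval_repr b fun v ↦ ?_
  rw [eval_coeff_taylorExpansion, Polynomial.coeff_zero_eq_eval_zero, eval_lineSubst, zero_smul,
    add_zero, eval_C]

theorem eval_coeff_taylorExpansion_eq_zero {H : Submodule K V} {p : MvPolynomial ι K}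
    (hp : ∀ k ∈ H, eval (b.repr k) p = 0) {h k : V} (hh : h ∈ H) (hk : k ∈ H) (m : ℕ) :
    eval (b.repr k) ((taylorExpansion b h p).coeff m) = 0 := by
  have hline : lineSubst (b.repr h) (b.repr k) p = 0 := Polynomial.funext fun t ↦ by
    simpa [eval_lineSubst] using hp (h + t • k) (H.add_mem hh (H.smul_mem t hk))
  rw [eval_coeff_taylorExpansion, hline, Polynomial.coeff_zero]

end Infinite

variable [Fintype ι] [DecidableEq ι]

theorem taylorExpansion_toMvPolynomial (h : V) (A : End K V) (i : ι) :
    taylorExpansion b h (A.toMvPolynomial b b i) =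
      Polynomial.C (C (b.repr (A h) i)) +
        Polynomial.X * Polynomial.C (A.toMvPolynomial b b i) := by
  have hA : b.repr (A h) i = ∑ j, LinearMap.toMatrix b b A i j * b.repr h j :=
    (congr_fun (LinearMap.toMatrix_mulVec_repr b b A h) i).symm
  simp only [LinearMap.toMvPolynomial, Matrix.toMvPolynomial, ← C_mul_X_eq_monomial, map_sum,
    map_mul, taylorExpansion, algHom_C, Polynomial.algebraMap_apply, lineSubst_X,
    MvPolynomial.algebraMap_eq, hA, mul_add, Finset.sum_add_distrib, Finset.mul_sum, mul_left_comm]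

-- The substitution `y ↦ h + t y` carries the vector field `t (A h + t A y)` to `t A (h + t y)`.
theorem coeffDerivation_taylorExpansion (h : V) (A : End K V) (p : MvPolynomial ι K) :
    coeffDerivation (constantVectorField b (A h)) (taylorExpansion b h p) +
        Polynomial.X * coeffDerivation (linearVectorField b A) (taylorExpansion b h p) =
      Polynomial.X * taylorExpansion b h (linearVectorField b A p) := by
  induction p using MvPolynomial.induction_on with
  | C a => simp [MvPolynomial.algebraMap_eq, coeffDerivation_C]
  | add p q hp hq =>
    simp only [map_add, mul_add]
    linear_combination hp + hq
  | mul_X p i hp =>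
    have hX : taylorExpansion b h (X i) =
        Polynomial.C (C (b.repr h i)) + Polynomial.X * Polynomial.C (X i) := lineSubst_X _ _ i
    simp only [map_mul, Derivation.leibniz, smul_eq_mul, map_add, hX, coeffDerivation_C,
      coeffDerivation_X, linearVectorField_X, constantVectorField_X, derivation_C,
      taylorExpansion_toMvPolynomial, map_zero]
    linear_combination (Polynomial.C (C (b.repr h i)) + Polynomial.X * Polynomial.C (X i)) * hp

theorem constantVectorField_coeff_succ_taylorExpansion (h : V) {A : End K V}
    {p : MvPolynomial ι K} (hp : linearVectorField b A p = 0) (m : ℕ) :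
    constantVectorField b (A h) ((taylorExpansion b h p).coeff (m + 1)) =
      -linearVectorField b A ((taylorExpansion b h p).coeff m) := by
  have := congr_arg (Polynomial.coeff · (m + 1)) (coeffDerivation_taylorExpansion b h A p)
  rw [← add_eq_zero_iff_eq_neg]
  simpa only [Polynomial.coeff_add, Polynomial.coeff_X_mul, coeff_coeffDerivation, hp, map_zero,
    Polynomial.coeff_zero] using this

theorem eq_zero_of_linearVectorField_eq_zero [CharZero K] {E : Type*} [AddCommGroup E] [Module K E]
    (ρ : E →ₗ[K] End K V) {H : Submodule K V} {h : V} (hh : h ∈ H)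
    (hH : H ⊔ (ρ.flip h).range = ⊤) {p : MvPolynomial ι K}
    (hρ : ∀ x, linearVectorField b (ρ x) p = 0) (hp : ∀ k ∈ H, eval (b.repr k) p = 0) :
    p = 0 := by
  suffices ∀ m, (taylorExpansion b h p).coeff m = 0 from
    taylorExpansion_injective b h ((Polynomial.ext this).trans (map_zero _).symm)
  intro m
  induction m with
  | zero => rw [coeff_zero_taylorExpansion, hp h hh, C_0]
  | succ m ih =>
    refine eq_zero_of_constantVectorField_eq_zero b hH
      (fun k hk ↦ eval_coeff_taylorExpansion_eq_zero b hp hh hk _) ?_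
    rintro _ ⟨x, rfl⟩
    rw [LinearMap.flip_apply, constantVectorField_coeff_succ_taylorExpansion b h (hρ x), ih,
      map_zero, neg_zero]

end TaylorExpansion

section Lie

open LieAlgebra LieSubalgebra

theorem isKilling_of_nondegenerate {R L : Type*} [CommRing R] [LieRing L] [LieAlgebra R L]
    (h : (killingForm R L).Nondegenerate) : IsKilling R L where
  killingCompl_top_eq_bot := (LieSubmodule.toSubmodule_eq_bot _).mp <|
    (LieIdeal.coe_killingCompl_top R L).trans h.ker_eq_bot

variable {K L : Type*} [Field K] [LieRing L] [LieAlgebra K L]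

theorem le_engel_of_isNilpotent {H : LieSubalgebra K L} [LieRing.IsNilpotent H] {x : L}
    (hx : x ∈ H) : H ≤ engel K x := fun y hy ↦
  (mem_engel_iff K x y).mpr <|
    (mem_zeroRootSubalgebra K L H y).mp (le_zeroRootSubalgebra K L H hy) ⟨x, hx⟩

variable [FiniteDimensional K L]

section Infinite

variable [Infinite K]

theorem engel_le_engel_of_forall_finrank_le {H : LieSubalgebra K L} {x : L} (hx : x ∈ H)
    (hH : H ≤ engel K x) (hmin : ∀ y ∈ H, finrank K (engel K x) ≤ finrank K (engel K y))
    {y : L} (hy : y ∈ H) : engel K x ≤ engel K y := by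
  let E : {engel K z | z ∈ H} := ⟨engel K x, x, hx, rfl⟩
  have hE : IsMin E := by
    rintro ⟨_, z, hz, rfl⟩ hzx
    exact (toSubmodule_injective (Submodule.eq_of_le_of_finrank_le hzx (hmin z hz))).ge
  have hcard : (finrank K L : Cardinal) ≤ Cardinal.mk K :=
    Cardinal.natCast_le_aleph0.trans (Cardinal.infinite_iff.mp inferInstance)
  exact engel_isBot_of_isMin hcard H E hH hE ⟨engel K y, y, hy, rfl⟩

theorem isCartanSubalgebra_engel_of_isRegular {x : L} (hx : IsRegular K x) :
    (engel K x).IsCartanSubalgebra where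
  nilpotent := isNilpotent_of_forall_le_engel _ fun _ hy ↦
    engel_le_engel_of_forall_finrank_le (self_mem_engel K x) le_rfl
      (fun z _ ↦ (isRegular_iff_finrank_engel_eq_rank K x).mp hx ▸ rank_le_finrank_engel K z) hy
  self_normalizing := normalizer_engel K x

theorem exists_mem_engel_eq (C : LieSubalgebra K L) [C.IsCartanSubalgebra] :
    ∃ h ∈ C, engel K h = C := by
  let d : C → ℕ := fun y ↦ finrank K (engel K (y : L))
  let h := Function.argmin d
  have hC : C ≤ engel K (h : L) := le_engel_of_isNilpotent h.2
  refine ⟨h, h.2, hC.antisymm' fun z hz ↦ ?_⟩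
  rw [← zeroRootSubalgebra_eq_of_is_cartan K L C, mem_zeroRootSubalgebra]
  exact fun y ↦ (mem_engel_iff K (y : L) z).mp <| engel_le_engel_of_forall_finrank_le h.2 hC
    (fun w hw ↦ Function.argmin_le d ⟨w, hw⟩) y.2 hz

end Infinite

section Ad

attribute [local instance] LieRing.ofAssociativeRing

theorem engel_sup_range_ad (x : L) : (engel K x).toSubmodule ⊔ (ad K L x).range = ⊤ := by
  have hker : ⨆ n, (ad K L x ^ n).ker ≤ (engel K x).toSubmodule :=
    iSup_le fun n y hy ↦ (mem_engel_iff K x y).mpr ⟨n, hy⟩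
  have hrange : ⨅ n, (ad K L x ^ n).range ≤ (ad K L x).range :=
    (iInf_le _ 1).trans_eq (by rw [pow_one])
  rw [eq_top_iff, ← (ad K L x).isCompl_iSup_ker_pow_iInf_range_pow.sup_eq_top]
  exact sup_le_sup hker hrange

theorem finrank_le_rank_of_isCartanSubalgebra [CharZero K] (C : LieSubalgebra K L)
    [C.IsCartanSubalgebra] : finrank K C ≤ rank K L := by
  obtain ⟨h, hh, hC⟩ := exists_mem_engel_eq C
  by_contra! hlt
  let b := finBasis K L
  let φ : L →ₗ[K] End K L := ad K L
  have hflip : φ.flip h = -ad K L h := by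
    ext x
    exact (lie_skew x h).symm
  have hspan : C.toSubmodule ⊔ (φ.flip h).range = ⊤ := by
    rw [hflip, LinearMap.range_neg, ← hC, engel_sup_range_ad]
  refine polyCharpoly_coeff_rank_ne_zero K L b <| eq_zero_of_linearVectorField_eq_zero b φ
    (H := C.toSubmodule) hh hspan
    (fun x ↦ linearVectorField_polyCharpoly_coeff_eq_zero b ((ad K L).map_lie x) _) fun k hk ↦ ?_
  rw [LinearMap.polyCharpoly_coeff_eval]
  refine Polynomial.coeff_eq_zero_of_lt_natTrailingDegree (hlt.trans_le ?_)
  calc finrank K C ≤ finrank K (engel K k) :=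
        Submodule.finrank_mono (le_engel_of_isNilpotent hk)
    _ = (φ k).charpoly.natTrailingDegree := finrank_engel K k

theorem exists_commutator_iff_forall_killingForm_eq_zero (hnd : (killingForm K L).Nondegenerate)
    {a x : L} : (∃ b, x = ⁅a, b⁆) ↔ ∀ y, ⁅a, y⁆ = 0 → killingForm K L x y = 0 := by
  have hle : (ad K L a).range ≤ (killingForm K L).orthogonal (ad K L a).ker := by
    rintro _ ⟨b, rfl⟩ y hy
    rw [LinearMap.mem_ker, ad_apply, ← lie_skew, neg_eq_zero] at hy
    change killingForm K L y ⁅a, b⁆ = 0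
    rw [← LieModule.traceForm_apply_lie_apply, hy, map_zero, LinearMap.zero_apply]
  have heq : (ad K L a).range = (killingForm K L).orthogonal (ad K L a).ker := by
    refine Submodule.eq_of_le_of_finrank_eq hle ?_
    rw [LinearMap.BilinForm.finrank_orthogonal hnd, ← (ad K L a).finrank_range_add_finrank_ker,
      Nat.add_sub_cancel]
  calc (∃ b, x = ⁅a, b⁆) ↔ x ∈ (ad K L a).range := by
        simp only [LinearMap.mem_range, ad_apply, eq_comm]
    _ ↔ ∀ y, ⁅a, y⁆ = 0 → killingForm K L x y = 0 := by
        simp only [heq, LinearMap.BilinForm.mem_orthogonal_iff, LieModule.traceForm_comm K L L x,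
          LinearMap.mem_ker, ad_apply]

end Ad

theorem exists_isRegular_engel_eq [CharZero K] (C : LieSubalgebra K L) [C.IsCartanSubalgebra] :
    ∃ a, IsRegular K a ∧ engel K a = C := by
  obtain ⟨a, -, rfl⟩ := exists_mem_engel_eq C
  exact ⟨a, (isRegular_iff_finrank_engel_eq_rank K a).mpr <|
    (finrank_le_rank_of_isCartanSubalgebra _).antisymm (rank_le_finrank_engel K a), rfl⟩

end Lie

theorem commutator_iff_orthogonal_to_cartan_general {K : Type*} [Field K] [CharZero K]
    (L : Type*) [LieRing L] [LieAlgebra K L] [FiniteDimensional K L]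
    (hnd : (killingForm K L).Nondegenerate) (x : L) :
    (∃ a b : L, LieAlgebra.IsRegular K a ∧ x = ⁅a, b⁆) ↔
    (∃ C : LieSubalgebra K L, C.IsCartanSubalgebra ∧ ∀ c ∈ C, killingForm K L x c = 0) := by
  have := isKilling_of_nondegenerate hnd
  constructor
  · rintro ⟨a, b, ha, hx⟩
    have hC := isCartanSubalgebra_engel_of_isRegular ha
    refine ⟨LieSubalgebra.engel K a, hC, fun c hc ↦ ?_⟩
    have hac : ⁅a, c⁆ = 0 := congr_arg Subtype.val <|
      trivial_lie_zero (LieSubalgebra.engel K a) (LieSubalgebra.engel K a)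
        ⟨a, LieSubalgebra.self_mem_engel K a⟩ ⟨c, hc⟩
    exact (exists_commutator_iff_forall_killingForm_eq_zero hnd).mp ⟨b, hx⟩ c hac
  · rintro ⟨C, hC, hx⟩
    obtain ⟨a, ha, rfl⟩ := exists_isRegular_engel_eq C
    obtain ⟨b, hb⟩ := (exists_commutator_iff_forall_killingForm_eq_zero hnd).mpr fun y hy ↦
      hx y ((LieSubalgebra.mem_engel_iff K a y).mpr ⟨1, by simpa using hy⟩)
    exact ⟨a, b, ha, hb⟩

/-- In a real semisimple Lie algebra, `x` is a commutator `⁅a, b⁆` with `a` regular iff `x`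
is orthogonal (w.r.t. the Killing form) to some Cartan subalgebra. -/
theorem commutator_iff_orthogonal_to_cartan (L : Type*) [LieRing L] [LieAlgebra ℝ L]
    [FiniteDimensional ℝ L]
    (hnd : (killingForm ℝ L).Nondegenerate) (x : L) :
    (∃ a b : L, LieAlgebra.IsRegular ℝ a ∧ x = ⁅a, b⁆) ↔
    (∃ C : LieSubalgebra ℝ L, C.IsCartanSubalgebra ∧ ∀ c ∈ C, killingForm ℝ L x c = 0) :=
  commutator_iff_orthogonal_to_cartan_general L hnd x
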